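/- Let (A*,w*) be an optimal solution to the maximin support instance with t*=supp_{w*}(A*), and let (A,w) be a balanced solution with |A|≤k and A≠A*. Then there exists a candidate c'∈A*∖A with score_{(A,w)}(c') ≥ t*/4. -/

import Mathlib

/-!
The average over `c' ∈ A* \ A` of the prescore at threshold `t*/4` is already at least `t*/4`, so
some such `c'` has prescore, hence score, at least `t*/4`.

Put `τ = t*/2`, let `B` be the set of members of `A` with `w`-support at most `τ`, and let `L` be
the set of voters approving some candidate of `B`.  Since `w` is balanced, a voter spends all her
strength on those of her approved members of `A` that have least support
(`BalancedWeight.spends_all`, `BalancedWeight.eq_zero_of_supp_lt`); hence voters of `L` spend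
everything on `B`, and their total strength is at most `τ |B|`.  In `w*`, the candidates in
`B ∩ A*` are supported by voters of `L` only and receive at least `t*` each, so at most
`τ |B| - t* |B ∩ A*| ≤ τ |A \ A*| ≤ τ |A* \ A|` of the strength of `L` reaches `A* \ A`.  As
`A* \ A` receives at least `t* |A* \ A|` in total, voters outside `L` contribute at least
`τ |A* \ A|` to it.  Such a voter approves only members of `A` with support above `τ`, so at
threshold `τ/2 = t*/4` she keeps a slack of at least half her strength.  Thus the prescores over
`A* \ A` add up to at least `(τ/2) |A* \ A|`.
-/


open Finset

section Defs

variable {V Cand : Type*} [Fintype V] [Fintype Cand] [DecidableEq V] [DecidableEq Cand]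

/-- The set `C_n` of candidates approved by voter `n`. -/
def approves (edge : V → Cand → Prop) [∀ n c, Decidable (edge n c)] (n : V) : Finset Cand :=
  Finset.univ.filter (fun c => edge n c)

/-- The set `N_c` of voters approving candidate `c`. -/
def approvers (edge : V → Cand → Prop) [∀ n c, Decidable (edge n c)] (c : Cand) : Finset V :=
  Finset.univ.filter (fun n => edge n c)

/-- Feasibility of an edge-weight vector: nonnegative, supported on the edges of the
approval graph, and the total weight assigned by each voter is at most her vote strength. -/
def Feasible (edge : V → Cand → Prop) [∀ n c, Decidable (edge n c)]
    (s : V → ℝ) (w : V → Cand → ℝ) : Prop :=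
  (∀ n c, 0 ≤ w n c) ∧ (∀ n c, ¬ edge n c → w n c = 0) ∧
    ∀ n, ∑ c ∈ approves edge n, w n c ≤ s n

/-- The support `supp_w(c)` of a candidate. -/
noncomputable def supp (edge : V → Cand → Prop) [∀ n c, Decidable (edge n c)]
    (w : V → Cand → ℝ) (c : Cand) : ℝ :=
  ∑ n ∈ approvers edge c, w n c

/-- `supp_w(A) = min_{c ∈ A} supp_w(c)`, valued in `EReal` with the convention
`supp_w(∅) = ∞`. -/
noncomputable def suppMin (edge : V → Cand → Prop) [∀ n c, Decidable (edge n c)]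
    (w : V → Cand → ℝ) (A : Finset Cand) : EReal :=
  A.inf (fun c => (supp edge w c : EReal))

/-- `w` is balanced for `A`: among feasible vectors it maximizes the sum of member supports
and, subject to that, minimizes the sum of squared member supports. -/
def BalancedWeight (edge : V → Cand → Prop) [∀ n c, Decidable (edge n c)] (s : V → ℝ)
    (A : Finset Cand) (w : V → Cand → ℝ) : Prop :=
  Feasible edge s w ∧
  (∀ w', Feasible edge s w' → ∑ c ∈ A, supp edge w' c ≤ ∑ c ∈ A, supp edge w c) ∧
  (∀ w', Feasible edge s w' → ∑ c ∈ A, supp edge w' c = ∑ c ∈ A, supp edge w c →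
    ∑ c ∈ A, (supp edge w c) ^ 2 ≤ ∑ c ∈ A, (supp edge w' c) ^ 2)

/-- The slack of voter `n` at threshold `t`, relative to the solution `(A, w)`. -/
noncomputable def slack (edge : V → Cand → Prop) [∀ n c, Decidable (edge n c)] (s : V → ℝ)
    (A : Finset Cand) (w : V → Cand → ℝ) (n : V) (t : ℝ) : ℝ :=
  s n - ∑ c ∈ A ∩ approves edge n, w n c * min 1 (t / supp edge w c)

/-- The pre-score of an unelected candidate `c'` at threshold `t`. -/
noncomputable def prescore (edge : V → Cand → Prop) [∀ n c, Decidable (edge n c)] (s : V → ℝ)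
    (A : Finset Cand) (w : V → Cand → ℝ) (c' : Cand) (t : ℝ) : ℝ :=
  ∑ n ∈ approvers edge c', slack edge s A w n t

/-- `score(c') = max { t ≥ 0 : prescore(c', t) ≥ t }`. -/
noncomputable def score (edge : V → Cand → Prop) [∀ n c, Decidable (edge n c)] (s : V → ℝ)
    (A : Finset Cand) (w : V → Cand → ℝ) (c' : Cand) : ℝ :=
  sSup {t : ℝ | 0 ≤ t ∧ t ≤ prescore edge s A w c' t}

/-- Proportional justified representation for a committee of target size `k`. -/
def PJR (edge : V → Cand → Prop) [∀ n c, Decidable (edge n c)] (s : V → ℝ)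
    (k : ℕ) (A : Finset Cand) : Prop :=
  ¬ ∃ (N' : Finset V) (r : ℕ), 0 < r ∧ r ≤ k ∧
      (r : ℝ) / k * ∑ n, s n ≤ ∑ n ∈ N', s n ∧
      r ≤ (N'.inf (approves edge)).card ∧
      (A ∩ N'.sup (approves edge)).card < r

/-- Parametric proportional justified representation (`t`-PJR). -/
def tPJR (edge : V → Cand → Prop) [∀ n c, Decidable (edge n c)] (s : V → ℝ)
    (A : Finset Cand) (t : ℝ) : Prop :=
  ¬ ∃ (N' : Finset V) (r : ℕ), 0 < r ∧ r ≤ A.card ∧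
      (r : ℝ) * t ≤ ∑ n ∈ N', s n ∧
      r ≤ (N'.inf (approves edge)).card ∧
      (A ∩ N'.sup (approves edge)).card < r

end Defs

section Helpers

variable {V Cand : Type*} [Fintype V] [Fintype Cand] [DecidableEq V] [DecidableEq Cand]
  {edge : V → Cand → Prop} [∀ n c, Decidable (edge n c)] {s : V → ℝ} {w : V → Cand → ℝ}
  {A : Finset Cand}

lemma supp_eq_sum_univ (hz : ∀ n c, ¬ edge n c → w n c = 0) (c : Cand) :
    supp edge w c = ∑ n, w n c := by
  unfold supp approvers
  rw [Finset.sum_filter]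
  refine Finset.sum_congr rfl fun n _ => ?_
  split_ifs with h
  · rfl
  · exact (hz n c h).symm

lemma sum_approves_eq_sum_univ (hz : ∀ n c, ¬ edge n c → w n c = 0) (n : V) :
    ∑ c ∈ approves edge n, w n c = ∑ c, w n c := by
  unfold approves
  rw [Finset.sum_filter]
  refine Finset.sum_congr rfl fun c _ => ?_
  split_ifs with h
  · rfl
  · exact (hz n c h).symm

lemma Feasible.sum_le (hw : Feasible edge s w) (n : V) (B : Finset Cand) :
    ∑ c ∈ B, w n c ≤ s n :=
  calc ∑ c ∈ B, w n c ≤ ∑ c, w n c :=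
        Finset.sum_le_sum_of_subset_of_nonneg (Finset.subset_univ _) fun c _ _ => hw.1 n c
    _ = ∑ c ∈ approves edge n, w n c := (sum_approves_eq_sum_univ hw.2.1 n).symm
    _ ≤ s n := hw.2.2 n

/-- Redistributing the strength of a single voter `n` according to `v` keeps `w` feasible. -/
lemma Feasible.update (hw : Feasible edge s w) {n : V} {v : Cand → ℝ} (hv : ∀ c, 0 ≤ v c)
    (hz : ∀ c, ¬ edge n c → v c = 0) (hle : ∑ c, v c ≤ s n) :
    Feasible edge s (Function.update w n v) := by
  have hz' : ∀ m c, ¬ edge m c → Function.update w n v m c = 0 := by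
    intro m c h
    by_cases hm : m = n
    · subst hm; simpa using hz c h
    · simpa [hm] using hw.2.1 m c h
  refine ⟨fun m c => ?_, hz', fun m => ?_⟩
  · by_cases hm : m = n
    · subst hm; simpa using hv c
    · simpa [hm] using hw.1 m c
  · rw [sum_approves_eq_sum_univ hz']
    by_cases hm : m = n
    · subst hm; simpa using hle
    · simpa [hm] using hw.sum_le m Finset.univ

lemma Feasible.supp_update (hw : Feasible edge s w) {n : V} {v : Cand → ℝ} (hv : ∀ c, 0 ≤ v c)
    (hz : ∀ c, ¬ edge n c → v c = 0) (hle : ∑ c, v c ≤ s n) (c : Cand) :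
    supp edge (Function.update w n v) c = supp edge w c + (v c - w n c) := by
  rw [supp_eq_sum_univ (hw.update hv hz hle).2.1, supp_eq_sum_univ hw.2.1,
    ← Finset.add_sum_erase _ _ (Finset.mem_univ n),
    ← Finset.add_sum_erase _ (fun m => w m c) (Finset.mem_univ n)]
  have h : ∑ m ∈ Finset.univ.erase n, Function.update w n v m c
      = ∑ m ∈ Finset.univ.erase n, w m c :=
    Finset.sum_congr rfl fun m hm => by simp [Finset.ne_of_mem_erase hm]
  rw [h]
  simp
  ring

/-- Maximality of the total support: a voter approving a member of `A` spends all her strength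
on `A`. -/
lemma BalancedWeight.spends_all (h : BalancedWeight edge s A w) {n : V} {c₀ : Cand}
    (hc₀ : c₀ ∈ A) (he : edge n c₀) : ∑ c ∈ A, w n c = s n := by
  refine le_antisymm (h.1.sum_le n A) ?_
  by_contra! hlt
  -- Otherwise, drop what `n` spends outside `A` and give all her unspent strength to `c₀`.
  set r := s n - ∑ c ∈ A, w n c with hr
  set v : Cand → ℝ := fun c => (if c ∈ A then w n c else 0) + (if c = c₀ then r else 0) with hvdef
  have hrpos : 0 < r := by linarith
  have hv : ∀ c, 0 ≤ v c := fun c => by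
    have := h.1.1 n c
    simp only [hvdef]
    split_ifs <;> linarith
  have hz : ∀ c, ¬ edge n c → v c = 0 := fun c hc => by
    have h1 : c ≠ c₀ := fun e => hc (e ▸ he)
    simp [hvdef, h1, h.1.2.1 n c hc]
  have hle : ∑ c, v c ≤ s n := by
    simp [hvdef, Finset.sum_add_distrib, hr]
  have hmax := h.2.1 _ (h.1.update hv hz hle)
  rw [Finset.sum_congr rfl fun c _ => h.1.supp_update hv hz hle c, Finset.sum_add_distrib] at hmax
  have hsum : ∑ c ∈ A, (v c - w n c) = r := by
    rw [Finset.sum_congr rfl (g := fun c => if c = c₀ then r else 0)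
      (fun c hc => by simp [hvdef, hc])]
    simp [hc₀]
  linarith

/-- Minimality of the sum of squares: no voter gives weight to a member of `A` if she approves
another member with smaller support. -/
lemma BalancedWeight.eq_zero_of_supp_lt (h : BalancedWeight edge s A w) {n : V} {c d : Cand}
    (hc : c ∈ A) (hd : d ∈ A) (he : edge n c) (hlt : supp edge w c < supp edge w d) :
    w n d = 0 := by
  by_contra hne
  have hpos : 0 < w n d := lt_of_le_of_ne (h.1.1 n d) (Ne.symm hne)
  have hcd : c ≠ d := fun e => by simp [e] at hlt
  have hed : edge n d := by
    by_contra hed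
    exact hne (h.1.2.1 n d hed)
  -- Otherwise, moving a small amount `ε` from `d` to `c` decreases the sum of squares.
  obtain ⟨ε, hε, hεw, hεs⟩ : ∃ ε : ℝ, 0 < ε ∧ ε ≤ w n d ∧ ε < supp edge w d - supp edge w c := by
    refine ⟨min (w n d) ((supp edge w d - supp edge w c) / 2), lt_min hpos (by linarith),
      min_le_left _ _, lt_of_le_of_lt (min_le_right _ _) (by linarith)⟩
  set δ : Cand → ℝ := fun x => (if x = c then ε else 0) - (if x = d then ε else 0) with hδ
  set v : Cand → ℝ := fun x => w n x + δ x with hvdef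
  have hv : ∀ x, 0 ≤ v x := fun x => by
    have := h.1.1 n x
    simp only [hvdef, hδ]
    by_cases hx : x = d
    · subst hx
      simp [Ne.symm hcd, hεw]
    · simp only [hx, if_false]
      split_ifs <;> linarith
  have hz : ∀ x, ¬ edge n x → v x = 0 := fun x hx => by
    have h1 : x ≠ c := fun e => hx (e ▸ he)
    have h2 : x ≠ d := fun e => hx (e ▸ hed)
    simp [hvdef, hδ, h1, h2, h.1.2.1 n x hx]
  have hle : ∑ x, v x ≤ s n := by
    have := h.1.sum_le n Finset.univ
    simpa [hvdef, hδ, Finset.sum_add_distrib] using this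
  have hs : ∀ x, supp edge (Function.update w n v) x = supp edge w x + δ x := fun x => by
    rw [h.1.supp_update hv hz hle]
    simp [hvdef]
  have hδA : ∑ x ∈ A, δ x = 0 := by simp [hδ, hc, hd]
  have hmin := h.2.2 _ (h.1.update hv hz hle)
    (by simp only [hs, Finset.sum_add_distrib, hδA, add_zero])
  have hexp : ∀ x, (supp edge w x + δ x) ^ 2 = supp edge w x ^ 2
      + ((if x = c then 2 * ε * supp edge w x + ε ^ 2 else 0)
      + (if x = d then ε ^ 2 - 2 * ε * supp edge w x else 0)) := fun x => by
    by_cases h1 : x = c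
    · subst h1
      simp only [hδ, hcd, if_true, if_false]
      ring
    · by_cases h2 : x = d
      · simp only [hδ, h2, Ne.symm hcd, if_true, if_false]
        ring
      · simp [hδ, h1, h2]
  simp only [hs, hexp, Finset.sum_add_distrib, Finset.sum_ite_eq', hc, hd, if_true] at hmin
  nlinarith

/-- A voter approving a member of `A` of support at most `τ` spends all her strength on such
members. -/
lemma BalancedWeight.spends_all_low (h : BalancedWeight edge s A w) {n : V} {c₀ : Cand} {τ : ℝ}
    (hc₀ : c₀ ∈ A) (he : edge n c₀) (hτ : supp edge w c₀ ≤ τ) :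
    ∑ c ∈ A with supp edge w c ≤ τ, w n c = s n := by
  rw [← h.spends_all hc₀ he, Finset.sum_filter]
  refine Finset.sum_congr rfl fun c hc => ?_
  split_ifs with hcτ
  · rfl
  · exact (h.eq_zero_of_supp_lt hc₀ hc he (by linarith)).symm

/-- At a nonnegative threshold, slacks lie between `0` and the vote strengths. -/
lemma Feasible.slack_mem_Icc (hw : Feasible edge s w) (n : V) {t : ℝ} (ht : 0 ≤ t) :
    slack edge s A w n t ∈ Set.Icc 0 (s n) := by
  have hsupp : ∀ c, 0 ≤ supp edge w c := fun c => Finset.sum_nonneg fun m _ => hw.1 m c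
  have h1 : 0 ≤ ∑ c ∈ A ∩ approves edge n, w n c * min 1 (t / supp edge w c) :=
    Finset.sum_nonneg fun c _ =>
      mul_nonneg (hw.1 n c) (le_min zero_le_one (div_nonneg ht (hsupp c)))
  have h2 : ∑ c ∈ A ∩ approves edge n, w n c * min 1 (t / supp edge w c)
      ≤ ∑ c ∈ A ∩ approves edge n, w n c :=
    Finset.sum_le_sum fun c _ => mul_le_of_le_one_right (hw.1 n c) (min_le_left _ _)
  have h3 := hw.sum_le n (A ∩ approves edge n)
  constructor <;> simp only [slack] <;> linarith

lemma Feasible.half_le_slack (hw : Feasible edge s w) {n : V} {τ : ℝ} (hτ : 0 ≤ τ)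
    (h : ∀ c ∈ A, edge n c → τ < supp edge w c) :
    s n / 2 ≤ slack edge s A w n (τ / 2) := by
  have h2 : ∑ c ∈ A ∩ approves edge n, w n c * min 1 (τ / 2 / supp edge w c)
      ≤ ∑ c ∈ A ∩ approves edge n, w n c * (1 / 2) := by
    refine Finset.sum_le_sum fun c hc => mul_le_mul_of_nonneg_left ?_ (hw.1 n c)
    rw [Finset.mem_inter, approves, Finset.mem_filter] at hc
    have := h c hc.1 hc.2.2
    refine (min_le_right _ _).trans ?_
    rw [div_le_iff₀ (by linarith)]
    linarith
  rw [← Finset.sum_mul] at h2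
  have h3 := hw.sum_le n (A ∩ approves edge n)
  simp only [slack]
  linarith

lemma Feasible.le_score (hw : Feasible edge s w) {c' : Cand} {t : ℝ} (ht : 0 ≤ t)
    (h : t ≤ prescore edge s A w c' t) : t ≤ score edge s A w c' := by
  refine le_csSup ⟨∑ n ∈ approvers edge c', s n, ?_⟩ ⟨ht, h⟩
  rintro x ⟨hx0, hx⟩
  exact hx.trans (Finset.sum_le_sum fun n _ => (hw.slack_mem_Icc n hx0).2)

/-- The flow bound: let `L` be the set of voters approving some member of `A` of `w`-support at
most `τ`.  If `v` gives support at least `2 * τ` to each candidate of `A'`, then voters outside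
`L` give at least `τ` to the candidates of `A' \ A` on average. -/
lemma BalancedWeight.outside_contribution (h : BalancedWeight edge s A w) {v : V → Cand → ℝ}
    (hv : Feasible edge s v) {A' : Finset Cand} {τ : ℝ} (hτ : 0 ≤ τ)
    (hA' : ∀ c ∈ A', 2 * τ ≤ supp edge v c) (hcard : #A ≤ #A') :
    #(A' \ A) * τ ≤ ∑ c ∈ A' \ A, ∑ n with ∀ d ∈ A, edge n d → τ < supp edge w d, v n c := by
  set B := A.filter fun c => supp edge w c ≤ τ with hB
  set H := Finset.univ.filter fun n => ∀ d ∈ A, edge n d → τ < supp edge w d with hH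
  have hBA : B ⊆ A := Finset.filter_subset _ _
  have hL : ∀ n ∈ Hᶜ, ∑ c ∈ B, w n c = s n := by
    intro n hn
    simp only [hH, Finset.mem_compl, Finset.mem_filter, Finset.mem_univ, true_and] at hn
    push Not at hn
    obtain ⟨d, hd, he, hle⟩ := hn
    exact h.spends_all_low hd he hle
  have h1 : ∑ n ∈ Hᶜ, s n ≤ #B * τ := by
    rw [← Finset.sum_congr rfl hL, Finset.sum_comm, ← nsmul_eq_mul]
    refine Finset.sum_le_card_nsmul _ _ _ fun c hc => ?_
    refine le_trans ?_ (Finset.mem_filter.1 hc).2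
    rw [supp_eq_sum_univ h.1.2.1]
    exact Finset.sum_le_sum_of_subset_of_nonneg (Finset.subset_univ _) fun n _ _ => h.1.1 n c
  have hdisj : Disjoint (A' \ A) (B ∩ A') := by
    rw [Finset.disjoint_left]
    intro c hc hc'
    exact (Finset.mem_sdiff.1 hc).2 (hBA (Finset.mem_inter.1 hc').1)
  have h2 : ∑ c ∈ A' \ A, ∑ n ∈ Hᶜ, v n c + ∑ c ∈ B ∩ A', ∑ n ∈ Hᶜ, v n c ≤ ∑ n ∈ Hᶜ, s n := by
    rw [← Finset.sum_union hdisj, Finset.sum_comm]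
    exact Finset.sum_le_sum fun n _ => hv.sum_le n _
  have h3 : #(B ∩ A') * (2 * τ) ≤ ∑ c ∈ B ∩ A', ∑ n ∈ Hᶜ, v n c := by
    rw [← nsmul_eq_mul]
    refine Finset.card_nsmul_le_sum _ _ _ fun c hc => ?_
    obtain ⟨hcB, hcA'⟩ := Finset.mem_inter.1 hc
    refine (hA' c hcA').trans (le_of_eq ?_)
    rw [supp_eq_sum_univ hv.2.1]
    refine (Finset.sum_subset (Finset.subset_univ _) fun n _ hn => hv.2.1 n c fun he => ?_).symm
    rw [Finset.mem_compl, not_not, hH, Finset.mem_filter] at hn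
    exact absurd (hn.2 c (hBA hcB) he) (not_lt.2 (Finset.mem_filter.1 hcB).2)
  have h4 : #(A' \ A) * (2 * τ) ≤ ∑ c ∈ A' \ A, ∑ n ∈ H, v n c + ∑ c ∈ A' \ A, ∑ n ∈ Hᶜ, v n c := by
    rw [← Finset.sum_add_distrib, ← nsmul_eq_mul]
    refine Finset.card_nsmul_le_sum _ _ _ fun c hc => ?_
    rw [Finset.sum_add_sum_compl, ← supp_eq_sum_univ hv.2.1]
    exact hA' c (Finset.mem_sdiff.1 hc).1
  have h5 : #B ≤ #(B ∩ A') + #(A' \ A) := by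
    have e1 := Finset.card_inter_add_card_sdiff B A'
    have e2 := Finset.card_le_card (Finset.sdiff_subset_sdiff hBA (le_refl A'))
    have e3 := Finset.card_sdiff_le_card_sdiff_iff.2 hcard
    omega
  have h5' : (#B : ℝ) * τ ≤ (#(B ∩ A') + #(A' \ A)) * τ :=
    mul_le_mul_of_nonneg_right (by exact_mod_cast h5) hτ
  have h6 : (0 : ℝ) ≤ #(B ∩ A') * τ := by positivity
  linarith

end Helpers

theorem exists_quarter_score_candidate
    {V Cand : Type*} [Fintype V] [Fintype Cand] [DecidableEq V] [DecidableEq Cand]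
    (edge : V → Cand → Prop) [∀ n c, Decidable (edge n c)]
    (s : V → ℝ) (hs : ∀ n, 0 ≤ s n) (k : ℕ) (hk : 0 < k)
    (Astar : Finset Cand) (wstar : V → Cand → ℝ) (tstar : ℝ)
    (hwstar : Feasible edge s wstar) (hAstar : Astar.card = k)
    (htstar : suppMin edge wstar Astar = (tstar : EReal))
    (hopt : ∀ (B : Finset Cand) (v : V → Cand → ℝ), Feasible edge s v → B.card = k →
      suppMin edge v B ≤ suppMin edge wstar Astar)
    (A : Finset Cand) (w : V → Cand → ℝ)
    (hbal : BalancedWeight edge s A w) (hAk : A.card ≤ k) (hne : A ≠ Astar) :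
    ∃ c' ∈ Astar \ A, tstar / 4 ≤ score edge s A w c' := by
  have hmem : ∀ c ∈ Astar, tstar ≤ supp edge wstar c := fun c hc => by
    have := Finset.inf_le (f := fun c => (supp edge wstar c : EReal)) hc
    rw [← suppMin, htstar] at this
    exact_mod_cast this
  have hcard : #A ≤ #Astar := hAstar ▸ hAk
  have hD : (Astar \ A).Nonempty := by
    rw [Finset.sdiff_nonempty]
    exact fun hsub => hne (Finset.eq_of_subset_of_card_le hsub hcard).symm
  have ht : 0 ≤ tstar := by
    have : (0 : EReal) ≤ suppMin edge wstar Astar := by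
      refine Finset.le_inf fun c _ => ?_
      exact_mod_cast Finset.sum_nonneg fun n _ => hwstar.1 n c
    rw [htstar] at this
    exact_mod_cast this
  have hτ : 0 ≤ tstar / 2 := by linarith
  have hflow := hbal.outside_contribution hwstar hτ
    (fun c hc => by linarith [hmem c hc]) hcard
  have hpre : ∀ c ∈ Astar \ A,
      (∑ n with ∀ d ∈ A, edge n d → tstar / 2 < supp edge w d, wstar n c) / 2
        ≤ prescore edge s A w c (tstar / 2 / 2) := by
    intro c _
    rw [Finset.sum_div, prescore, approvers, Finset.sum_filter, Finset.sum_filter]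
    refine Finset.sum_le_sum fun n _ => ?_
    have hsl := (hbal.1.slack_mem_Icc (A := A) n (t := tstar / 2 / 2) (by linarith)).1
    by_cases he : edge n c
    · rw [if_pos he]
      split_ifs with hn
      · have h1 := hwstar.sum_le n {c}
        rw [Finset.sum_singleton] at h1
        linarith [hbal.1.half_le_slack hτ hn]
      · exact hsl
    · simp [he, hwstar.2.1 n c he]
  obtain ⟨c', hc', hle⟩ := Finset.exists_le_of_sum_le (s := Astar \ A)
    (f := fun _ => tstar / 2 / 2) (g := fun c => prescore edge s A w c (tstar / 2 / 2)) hD (by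
      refine le_trans ?_ (Finset.sum_le_sum hpre)
      rw [Finset.sum_const, nsmul_eq_mul, ← Finset.sum_div]
      linarith)
  refine ⟨c', hc', ?_⟩
  have e : tstar / 4 = tstar / 2 / 2 := by ring
  rw [e]
  exact hbal.1.le_score (by linarith) hle
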